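/- For the building blocks K_a = J_{\pi_{\leq}a} - (-1)^{p(a)}\Phi_a - (a|f) in S(R), the \lambda-brackets are: {K_a{}_\lambda K_b} = K_{[a,b]} + \lambda k(a|b) if a,b \in \bigoplus_{i\leq 0}g(i); {K_a{}_\lambda K_b} = -K_{[a,b]} = ([a,b]|f) if a,b \in g(1/2); and {K_a{}_\lambda K_b} = 0 otherwise. -/

import Mathlib

open Polynomial

noncomputable section

/-- A finite-dimensional Lie superalgebra `g` over `ℂ` together with an even
`sl₂`-triple `(e, h = 2x, f)` and a supersymmetric invariant bilinear form,
normalised by `(e|f) = 2(x|x) = 1`.  The parity of `g` is encoded by the grading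
involution `σg` (`σg a = a` for even `a` and `σg a = -a` for odd `a`). -/
structure SuperSetup (g : Type) [AddCommGroup g] [Module ℂ g] where
  lie : g →ₗ[ℂ] g →ₗ[ℂ] g
  σg : g →ₗ[ℂ] g
  σg_invol : ∀ a, σg (σg a) = a
  σg_lie : ∀ a b, σg (lie a b) = lie (σg a) (σg b)
  lie_skew : ∀ a b, (σg a = a ∨ σg b = b) → lie a b = - lie b a
  lie_skew_odd : ∀ a b, σg a = -a → σg b = -b → lie a b = lie b a
  jacobi : ∀ a b c, (σg a = a ∨ σg b = b) →
    lie a (lie b c) = lie (lie a b) c + lie b (lie a c)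
  jacobi_odd : ∀ a b c, σg a = -a → σg b = -b →
    lie a (lie b c) = lie (lie a b) c - lie b (lie a c)
  form : g →ₗ[ℂ] g →ₗ[ℂ] ℂ
  form_invariant : ∀ a b c, form (lie a b) c = form a (lie b c)
  form_super : ∀ a b, form (σg a) (σg b) = form a b
  e : g
  x : g
  f : g
  e_even : σg e = e
  x_even : σg x = x
  f_even : σg f = f
  lie_xe : lie x e = e
  lie_xf : lie x f = - f
  lie_ef : lie e f = (2 : ℂ) • x
  form_ef : form e f = 1
  form_xx : form x x = 1 / 2

namespace SuperSetup

variable {g : Type} [AddCommGroup g] [Module ℂ g]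

/-- The `ad x`-eigenspace `g(i)`. -/
def gwt (D : SuperSetup g) (i : ℚ) : Submodule ℂ g :=
  LinearMap.ker (D.lie D.x - (i : ℂ) • LinearMap.id)

/-- `n = ⊕_{i > 0} g(i)`. -/
def nplus (D : SuperSetup g) : Submodule ℂ g := ⨆ i : {i : ℚ // 0 < i}, D.gwt i
/-- `n₋ = ⊕_{i < 0} g(i)`. -/
def nminus (D : SuperSetup g) : Submodule ℂ g := ⨆ i : {i : ℚ // i < 0}, D.gwt i
/-- `m = ⊕_{i ≥ 1} g(i)`. -/
def mm (D : SuperSetup g) : Submodule ℂ g := ⨆ i : {i : ℚ // 1 ≤ i}, D.gwt i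
/-- `⊕_{i ≤ 0} g(i)`. -/
def gle (D : SuperSetup g) : Submodule ℂ g := ⨆ i : {i : ℚ // i ≤ 0}, D.gwt i
/-- `⊕_{i ≤ 1} g(i)`. -/
def gle1 (D : SuperSetup g) : Submodule ℂ g := ⨆ i : {i : ℚ // i ≤ 1}, D.gwt i
/-- `⊕_{i < 1} g(i)`. -/
def glt1 (D : SuperSetup g) : Submodule ℂ g := ⨆ i : {i : ℚ // i < 1}, D.gwt i
/-- The centraliser `g^f = {a ∈ g | [a, f] = 0}`. -/
def gf (D : SuperSetup g) : Submodule ℂ g := LinearMap.ker (D.lie.flip D.f)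

end SuperSetup

/-- `a` is a homogeneous element of parity sign `ε ∈ {1, -1}`. -/
def IsParity {g : Type} [AddCommGroup g] [Module ℂ g] (D : SuperSetup g)
    (a : g) (ε : ℂ) : Prop :=
  (ε = 1 ∧ D.σg a = a) ∨ (ε = -1 ∧ D.σg a = -a)

section PolyHelpers

variable {A : Type} [Ring A] [Algebra ℂ A]

/-- Apply the linear endomorphism `δ` to every coefficient of a polynomial. -/
def cmap (δ : A →ₗ[ℂ] A) (P : Polynomial A) : Polynomial A :=
  P.sum fun n c => Polynomial.monomial n (δ c)

/-- Substitution `λ ↦ -λ - ∂` (with `∂ = δ` acting on the coefficients). -/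
def oppSubst (δ : A →ₗ[ℂ] A) (P : Polynomial A) : Polynomial A :=
  P.sum fun n c => ∑ k ∈ Finset.range (n + 1),
    Polynomial.monomial k ((((-1 : ℂ) ^ n * (n.choose k : ℂ))) • ((δ ^ (n - k)) c))

/-- `[a_λ [b_μ c]]` as an element of `(A[λ])[μ]` (the outer variable is `μ`). -/
def jacLeft (Br : A →ₗ[ℂ] A →ₗ[ℂ] Polynomial A) (a : A) (P : Polynomial A) :
    Polynomial (Polynomial A) :=
  P.sum fun m c => Polynomial.monomial m (Br a c)

/-- `[b_μ [a_λ c]]` as an element of `(A[λ])[μ]` (the outer variable is `μ`). -/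
def jacRight (Br : A →ₗ[ℂ] A →ₗ[ℂ] Polynomial A) (b : A) (P : Polynomial A) :
    Polynomial (Polynomial A) :=
  P.sum fun n c => (Br b c).sum fun m d => Polynomial.monomial m (Polynomial.monomial n d)

/-- `Q(λ + μ)` as an element of `(A[λ])[μ]`. -/
def substAdd (Q : Polynomial A) : Polynomial (Polynomial A) :=
  Q.sum fun m c => ∑ k ∈ Finset.range (m + 1),
    Polynomial.monomial k (Polynomial.monomial (m - k) ((m.choose k : ℂ) • c))

/-- `[[a_λ b]_{λ+μ} c]` as an element of `(A[λ])[μ]`. -/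
def jacMid (Br : A →ₗ[ℂ] A →ₗ[ℂ] Polynomial A) (P : Polynomial A) (c : A) :
    Polynomial (Polynomial A) :=
  P.sum fun j d => Polynomial.C (Polynomial.X ^ j : Polynomial A) * substAdd (Br d c)

end PolyHelpers

/-- A Poisson vertex superalgebra structure on a unital associative `ℂ`-algebra `A`:
a supercommutative product (the parity being encoded by the involution `σ`), an even
derivation `δ = ∂`, and a `λ`-bracket `Br` (with values in `A[λ]`) satisfying
sesquilinearity, skewsymmetry, the Jacobi identity and the Leibniz rules. -/
structure PVA (A : Type) [Ring A] [Algebra ℂ A] where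
  σ : A →ₐ[ℂ] A
  σ_invol : ∀ a, σ (σ a) = a
  supercomm : ∀ a b : A, (σ a = a ∨ σ b = b) → a * b = b * a
  supercomm_odd : ∀ a b : A, σ a = -a → σ b = -b → a * b = -(b * a)
  δ : A →ₗ[ℂ] A
  δ_der : ∀ a b, δ (a * b) = δ a * b + a * δ b
  δ_even : ∀ a, σ (δ a) = δ (σ a)
  Br : A →ₗ[ℂ] A →ₗ[ℂ] Polynomial A
  br_parity : ∀ a b n, σ ((Br a b).coeff n) = (Br (σ a) (σ b)).coeff n
  sesq_left : ∀ a b, Br (δ a) b = -(Polynomial.X * Br a b)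
  sesq_right : ∀ a b, Br a (δ b) = Polynomial.X * Br a b + cmap δ (Br a b)
  leibniz : ∀ a b c, (σ a = a ∨ σ b = b) →
    Br a (b * c) = Polynomial.C b * Br a c + Br a b * Polynomial.C c
  leibniz_odd : ∀ a b c, σ a = -a → σ b = -b →
    Br a (b * c) = -(Polynomial.C b * Br a c) + Br a b * Polynomial.C c
  skew : ∀ a b, (σ a = a ∨ σ b = b) → Br a b = - oppSubst δ (Br b a)
  skew_odd : ∀ a b, σ a = -a → σ b = -b → Br a b = oppSubst δ (Br b a)
  jac : ∀ a b c, (σ a = a ∨ σ b = b) →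
    jacLeft Br a (Br b c) = jacMid Br (Br a b) c + jacRight Br b (Br a c)
  jac_odd : ∀ a b c, σ a = -a → σ b = -b →
    jacLeft Br a (Br b c) = jacMid Br (Br a b) c - jacRight Br b (Br a c)

/-- Dual bases `{u_α}, {u^α}` (indexed by `I = \bar S`) of the Lie superalgebra,
compatible with the parity and the `ad x`-grading, with `(u_α | u^β) = δ_{αβ}`. -/
structure BasisData {g : Type} [AddCommGroup g] [Module ℂ g] (D : SuperSetup g)
    (I : Type) [Fintype I] [DecidableEq I] where
  u : I → g
  udual : I → g
  jdeg : I → ℚ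
  par : I → Bool
  hu : ∀ α, u α ∈ D.gwt (jdeg α)
  hud : ∀ α, udual α ∈ D.gwt (-(jdeg α))
  hσu : ∀ α, D.σg (u α) = (if par α then (-1 : ℂ) else 1) • u α
  hσud : ∀ α, D.σg (udual α) = (if par α then (-1 : ℂ) else 1) • udual α
  hdual : ∀ α β, D.form (u α) (udual β) = if α = β then 1 else 0
  compl : ∀ a : g, (∑ α, D.form a (udual α) • u α) = a
  basisu : LinearIndependent ℂ u
  spanu : Submodule.span ℂ (Set.range u) = ⊤

namespace BasisData

variable {g : Type} [AddCommGroup g] [Module ℂ g] {D : SuperSetup g}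
  {I : Type} [Fintype I] [DecidableEq I]

/-- The index set `S` of the dual bases of `n` and `n₋`. -/
def S (Bs : BasisData D I) : Finset I := Finset.univ.filter fun α => 0 < Bs.jdeg α

/-- The index set `S(1/2)` of the basis of `g(1/2)`. -/
def Shalf (Bs : BasisData D I) : Finset I := Finset.univ.filter fun α => Bs.jdeg α = 1 / 2

/-- The sign `(-1)^{p(α)}`. -/
def sgn (Bs : BasisData D I) (α : I) : ℂ := if Bs.par α then -1 else 1

/-- The projection of `g` onto `⊕_{i ≤ 0} g(i)` determined by the dual bases. -/
def πle (Bs : BasisData D I) (a : g) : g :=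
  ∑ α ∈ Finset.univ.filter (fun α => Bs.jdeg α ≤ 0), D.form a (Bs.udual α) • Bs.u α

end BasisData

/-- A realization of the Poisson vertex algebra `S(R)` of the classical BRST complex,
where `R = Cur_k(g) ⊕ R_ch ⊕ R_ne`:  `ι` are the currents, `φc a = φ_{π₊ a}`,
`φd a = φ^{π₋ a}` are the charged free fermions and `Φn a = Φ_{π_{1/2} a}` are the
neutral free fermions, with the `λ`-brackets of the generators as in the paper. -/
structure BRST {g : Type} [AddCommGroup g] [Module ℂ g] (D : SuperSetup g)
    {I : Type} [Fintype I] [DecidableEq I] (Bs : BasisData D I)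
    {A : Type} [Ring A] [Algebra ℂ A] (P : PVA A) (k : ℂ) where
  ι : g →ₗ[ℂ] A
  φc : g →ₗ[ℂ] A
  φd : g →ₗ[ℂ] A
  Φn : g →ₗ[ℂ] A
  σι : ∀ a, P.σ (ι a) = ι (D.σg a)
  σφc : ∀ a, P.σ (φc a) = - φc (D.σg a)
  σφd : ∀ a, P.σ (φd a) = - φd (D.σg a)
  σΦ : ∀ a, P.σ (Φn a) = Φn (D.σg a)
  φc_proj : ∀ i : ℚ, i ≤ 0 → ∀ a ∈ D.gwt i, φc a = 0
  φd_proj : ∀ i : ℚ, 0 ≤ i → ∀ a ∈ D.gwt i, φd a = 0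
  Φn_proj : ∀ i : ℚ, i ≠ 1 / 2 → ∀ a ∈ D.gwt i, Φn a = 0
  br_cur : ∀ a b, P.Br (ι a) (ι b) =
    Polynomial.C (ι (D.lie a b)) + Polynomial.monomial 1 (algebraMap ℂ A (k * D.form a b))
  br_φφ : ∀ a b, P.Br (φc a) (φc b) = 0
  br_φdφd : ∀ a b, P.Br (φd a) (φd b) = 0
  br_φφd : ∀ i j : ℚ, 0 < i → j < 0 → ∀ a ∈ D.gwt i, ∀ b ∈ D.gwt j,
    P.Br (φc a) (φd b) = Polynomial.C (algebraMap ℂ A (D.form a b))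
  br_ΦΦ : ∀ a ∈ D.gwt (1 / 2 : ℚ), ∀ b ∈ D.gwt (1 / 2 : ℚ),
    P.Br (Φn a) (Φn b) = Polynomial.C (algebraMap ℂ A (D.form D.f (D.lie a b)))
  br_curφc : ∀ a b, P.Br (ι a) (φc b) = 0
  br_curφd : ∀ a b, P.Br (ι a) (φd b) = 0
  br_curΦ : ∀ a b, P.Br (ι a) (Φn b) = 0
  br_φcΦ : ∀ a b, P.Br (φc a) (Φn b) = 0
  br_φdΦ : ∀ a b, P.Br (φd a) (Φn b) = 0

namespace BRST

variable {g : Type} [AddCommGroup g] [Module ℂ g] {D : SuperSetup g}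
  {I : Type} [Fintype I] [DecidableEq I] {Bs : BasisData D I}
  {A : Type} [Ring A] [Algebra ℂ A] {P : PVA A} {k : ℂ}

/-- The element
`d = ∑_{α∈S} (-1)^{p(α)} φ^α u_α + ∑_{α∈S(1/2)} φ^α Φ_α + φ^f
  + (1/2) ∑_{α,β∈S} (-1)^{p(α)} φ^α φ^β φ_{[u_β, u_α]}` of `S(R)`. -/
def dd (R : BRST D Bs P k) : A :=
  (∑ α ∈ Bs.S, Bs.sgn α • (R.φd (Bs.udual α) * R.ι (Bs.u α)))
    + (∑ α ∈ Bs.Shalf, R.φd (Bs.udual α) * R.Φn (Bs.u α))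
    + R.φd D.f
    + (1 / 2 : ℂ) • ∑ α ∈ Bs.S, ∑ β ∈ Bs.S,
        Bs.sgn α • (R.φd (Bs.udual α) * (R.φd (Bs.udual β) * R.φc (D.lie (Bs.u β) (Bs.u α))))

/-- The differential `d_{(0)} : S(R) → S(R)`, `a ↦ {d_λ a}|_{λ=0}`. -/
def d0 (R : BRST D Bs P k) : A →ₗ[ℂ] A where
  toFun a := (P.Br R.dd a).coeff 0
  map_add' a b := by simp
  map_smul' c a := by simp

/-- The building block `J_a = a + ∑_{α∈S} φ^α φ_{[u_α, a]}`. -/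
def Jel (R : BRST D Bs P k) (a : g) : A :=
  R.ι a + ∑ α ∈ Bs.S, R.φd (Bs.udual α) * R.φc (D.lie (Bs.u α) a)

/-- The building block `K_a = J_{π_≤ a} - (-1)^{p(a)} Φ_a - (a|f)`
(for `a` homogeneous of parity sign `ε`). -/
def Kel (R : BRST D Bs P k) (a : g) (ε : ℂ) : A :=
  R.Jel (Bs.πle a) - ε • R.Φn a - algebraMap ℂ A (D.form a D.f)

/-- The subalgebra `S(R₋)` of `S(R)`, where
`R₋ = ℂ[∂] ⊗ (J_{g_≤} ⊕ φ^{n₋} ⊕ Φ_{g(1/2)})`. -/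
def Aminus (R : BRST D Bs P k) : Subalgebra ℂ A :=
  Algebra.adjoin ℂ
    ({y : A | ∃ (n : ℕ) (i : ℚ) (a : g), i ≤ 0 ∧ a ∈ D.gwt i ∧ y = (P.δ ^ n) (R.Jel a)}
      ∪ {y : A | ∃ (n : ℕ) (j : ℚ) (b : g), j < 0 ∧ b ∈ D.gwt j ∧ y = (P.δ ^ n) (R.φd b)}
      ∪ {y : A | ∃ (n : ℕ) (c : g), c ∈ D.gwt (1 / 2 : ℚ) ∧ y = (P.δ ^ n) (R.Φn c)})

/-- The subalgebra `S(R₊)` of `S(R)`, where `R₊ = ℂ[∂] ⊗ (φ_n ⊕ d_{(0)}(φ_n))`. -/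
def Aplus (R : BRST D Bs P k) : Subalgebra ℂ A :=
  Algebra.adjoin ℂ
    ({y : A | ∃ (n : ℕ) (i : ℚ) (a : g), 0 < i ∧ a ∈ D.gwt i ∧ y = (P.δ ^ n) (R.φc a)}
      ∪ {y : A | ∃ (n : ℕ) (i : ℚ) (a : g), 0 < i ∧ a ∈ D.gwt i ∧
          y = (P.δ ^ n) (R.d0 (R.φc a))})

end BRST

/-!
Write `J_a = a + J^{ch}_a` with `J^{ch}_a = ∑_{α∈S} φ^α φ_{[u_α, a]}`. For `a ∈ ⊕_{i≤0} g(i)` the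
element `J^{ch}_a` acts on the charged fermions as `ad a`, up to sign: `{J^{ch}_a λ φ_c}` is
`(-1)^{p(a)} φ_{[a,c]}`, and `{J^{ch}_a λ φ^b}` is `φ^{[a,b]}`, written `∑_α ([u_α, a]|b) φ^α` by
invariance of the form. Hence the Leibniz rule and the Jacobi identity give
`{J^{ch}_a λ J^{ch}_b} = J^{ch}_{[a,b]}`; since `J^{ch}` commutes with the currents, the central
term of `{J_a λ J_b}` is that of `{a λ b}`.

Modulo constants, which are central, `K_a` is `J_a` in degree `≤ 0`, `-(-1)^{p(a)} Φ_a` in degree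
`1/2` and `0` in every other degree. As `Φ` commutes with `J`, only the brackets `{J λ J}` and
`{Φ λ Φ}` survive. The sign `(-1)^{p(a)+p(b)}` of the latter disappears because `f` is even, so that
`([a,b]|f) ≠ 0` forces `p(a) = p(b)`.
-/

/-- The sign `(-1)^p` of a parity, `true` being odd. The Koszul sign `(-1)^{pq}` is
`paritySign (p && q)`, and the parity of a product is `p ^^ q`. -/
def paritySign (p : Bool) : ℂ := if p then -1 else 1

namespace SuperSetup

variable {g : Type} [AddCommGroup g] [Module ℂ g] {D : SuperSetup g} {a b c : g} {i j : ℚ}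
  {p q : Bool}

theorem mem_gwt : a ∈ D.gwt i ↔ D.lie D.x a = (i : ℂ) • a := by
  simp [gwt, sub_eq_zero]

theorem lie_mem_gwt (ha : a ∈ D.gwt i) (hb : b ∈ D.gwt j) : D.lie a b ∈ D.gwt (i + j) := by
  rw [mem_gwt] at *
  rw [D.jacobi _ _ _ (.inl D.x_even), ha, hb]
  simp [add_smul]

theorem f_mem_gwt : D.f ∈ D.gwt (-1) := by
  simp [mem_gwt, D.lie_xf]

theorem form_eq_zero_of_mem_gwt (ha : a ∈ D.gwt i) (hb : b ∈ D.gwt j) (hij : i + j ≠ 0) :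
    D.form a b = 0 := by
  rw [mem_gwt] at ha hb
  have invariance := D.form_invariant a D.x b
  rw [D.lie_skew a D.x (.inr D.x_even), ha, hb] at invariance
  simp only [map_neg, map_smul, LinearMap.neg_apply, LinearMap.smul_apply, smul_eq_mul]
    at invariance
  have key : ((i + j : ℚ) : ℂ) * D.form a b = 0 := by
    push_cast
    linear_combination -invariance
  exact (mul_eq_zero.1 key).resolve_left (by exact_mod_cast hij)

theorem form_lie_comm_of_even (hc : D.σg c = c) : D.form c (D.lie a b) = D.form (D.lie a b) c :=
  calc D.form c (D.lie a b)
      = D.form (D.lie c a) b := (D.form_invariant c a b).symm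
    _ = -D.form (D.lie a c) b := by rw [D.lie_skew c a (.inl hc), map_neg, LinearMap.neg_apply]
    _ = -D.form a (D.lie c b) := by rw [D.form_invariant]
    _ = D.form a (D.lie b c) := by rw [D.lie_skew c b (.inl hc), map_neg, neg_neg]
    _ = D.form (D.lie a b) c := (D.form_invariant a b c).symm

/-- The homogeneous elements of `g` of parity `p`. -/
def parityPart (D : SuperSetup g) (p : Bool) : Submodule ℂ g :=
  Module.End.eigenspace D.σg (paritySign p)

theorem mem_parityPart : a ∈ D.parityPart p ↔ D.σg a = paritySign p • a :=
  Module.End.mem_eigenspace_iff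

theorem mem_parityPart_false : a ∈ D.parityPart false ↔ D.σg a = a := by
  simp [mem_parityPart, paritySign]

theorem mem_parityPart_true : a ∈ D.parityPart true ↔ D.σg a = -a := by
  simp [mem_parityPart, paritySign]

theorem lie_mem_parityPart (ha : a ∈ D.parityPart p) (hb : b ∈ D.parityPart q) :
    D.lie a b ∈ D.parityPart (p ^^ q) := by
  rw [mem_parityPart] at *
  rw [D.σg_lie, ha, hb]
  cases p <;> cases q <;> simp [paritySign]

theorem lie_skew_of_mem_parityPart (ha : a ∈ D.parityPart p) (hb : b ∈ D.parityPart q) :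
    D.lie a b = -paritySign (p && q) • D.lie b a :=
  match p, q with
  | false, _ => by
    simpa [paritySign] using D.lie_skew a b (.inl (mem_parityPart_false.1 ha))
  | true, false => by
    simpa [paritySign] using D.lie_skew a b (.inr (mem_parityPart_false.1 hb))
  | true, true => by
    simpa [paritySign] using
      D.lie_skew_odd a b (mem_parityPart_true.1 ha) (mem_parityPart_true.1 hb)

theorem lie_lie_of_mem_parityPart (ha : a ∈ D.parityPart p) (hb : b ∈ D.parityPart q) (c : g) :
    D.lie a (D.lie b c) = D.lie (D.lie a b) c + paritySign (p && q) • D.lie b (D.lie a c) :=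
  match p, q with
  | false, _ => by
    simpa [paritySign] using D.jacobi a b c (.inl (mem_parityPart_false.1 ha))
  | true, false => by
    simpa [paritySign] using D.jacobi a b c (.inr (mem_parityPart_false.1 hb))
  | true, true => by
    simpa [paritySign, sub_eq_add_neg] using
      D.jacobi_odd a b c (mem_parityPart_true.1 ha) (mem_parityPart_true.1 hb)

theorem paritySign_mul_form (ha : a ∈ D.parityPart p) (hb : b ∈ D.parityPart q) :
    paritySign (p ^^ q) * D.form a b = D.form a b := by
  have invariance := D.form_super a b
  rw [mem_parityPart.1 ha, mem_parityPart.1 hb] at invariance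
  revert invariance
  cases p <;> cases q <;> simp [paritySign]

theorem form_eq_zero_of_mem_parityPart (ha : a ∈ D.parityPart p) (hb : b ∈ D.parityPart q)
    (hpq : p ≠ q) : D.form a b = 0 := by
  have odd_sign : paritySign (p ^^ q) = -1 := by simp [paritySign, hpq]
  have key := paritySign_mul_form ha hb
  rw [odd_sign, neg_one_mul] at key
  exact neg_eq_self.1 key

end SuperSetup

theorem IsParity.exists_mem_parityPart {g : Type} [AddCommGroup g] [Module ℂ g]
    {D : SuperSetup g} {a : g} {ε : ℂ} (h : IsParity D a ε) :
    ∃ p, ε = paritySign p ∧ a ∈ D.parityPart p := by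
  rcases h with ⟨hε, ha⟩ | ⟨hε, ha⟩
  · exact ⟨false, by simpa [paritySign], SuperSetup.mem_parityPart_false.2 ha⟩
  · exact ⟨true, by simpa [paritySign], SuperSetup.mem_parityPart_true.2 ha⟩

theorem oppSubst_C {A : Type} [Ring A] [Algebra ℂ A] (δ : A →ₗ[ℂ] A) (v : A) :
    oppSubst δ (C v) = C v := by
  rw [oppSubst, sum_C_index] <;> simp

namespace PVA

variable {A : Type} [Ring A] [Algebra ℂ A] {P : PVA A} {x y z u v w : A} {p q : Bool}

/-- The homogeneous elements of a Poisson vertex superalgebra of parity `p`. -/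
def parityPart (P : PVA A) (p : Bool) : Submodule ℂ A :=
  Module.End.eigenspace P.σ.toLinearMap (paritySign p)

theorem mem_parityPart : x ∈ P.parityPart p ↔ P.σ x = paritySign p • x :=
  Module.End.mem_eigenspace_iff

theorem mem_parityPart_false : x ∈ P.parityPart false ↔ P.σ x = x := by
  simp [mem_parityPart, paritySign]

theorem mem_parityPart_true : x ∈ P.parityPart true ↔ P.σ x = -x := by
  simp [mem_parityPart, paritySign]

theorem mul_mem_parityPart (hx : x ∈ P.parityPart p) (hy : y ∈ P.parityPart q) :
    x * y ∈ P.parityPart (p ^^ q) := by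
  rw [mem_parityPart] at *
  rw [map_mul, hx, hy]
  cases p <;> cases q <;> simp [paritySign]

theorem br_skew (hx : x ∈ P.parityPart p) (hy : y ∈ P.parityPart q) :
    P.Br x y = -paritySign (p && q) • oppSubst P.δ (P.Br y x) :=
  match p, q with
  | false, _ => by
    simpa [paritySign] using P.skew x y (.inl (mem_parityPart_false.1 hx))
  | true, false => by
    simpa [paritySign] using P.skew x y (.inr (mem_parityPart_false.1 hy))
  | true, true => by
    simpa [paritySign] using P.skew_odd x y (mem_parityPart_true.1 hx) (mem_parityPart_true.1 hy)

theorem br_mul (hx : x ∈ P.parityPart p) (hy : y ∈ P.parityPart q) (z : A) :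
    P.Br x (y * z) = paritySign (p && q) • (C y * P.Br x z) + P.Br x y * C z :=
  match p, q with
  | false, _ => by
    simpa [paritySign] using P.leibniz x y z (.inl (mem_parityPart_false.1 hx))
  | true, false => by
    simpa [paritySign] using P.leibniz x y z (.inr (mem_parityPart_false.1 hy))
  | true, true => by
    simpa [paritySign] using
      P.leibniz_odd x y z (mem_parityPart_true.1 hx) (mem_parityPart_true.1 hy)

theorem br_eq_C_of_br_swap_eq_C (hx : x ∈ P.parityPart p) (hy : y ∈ P.parityPart q)
    (h : P.Br y x = C v) : P.Br x y = C (-paritySign (p && q) • v) := by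
  rw [br_skew hx hy, h, oppSubst_C, smul_C]

theorem br_eq_zero_of_br_swap_eq_zero (hx : x ∈ P.parityPart p) (hy : y ∈ P.parityPart q)
    (h : P.Br y x = 0) : P.Br x y = 0 := by
  simpa using br_eq_C_of_br_swap_eq_C hx hy (h.trans C_0.symm)

theorem br_mul_eq_C (hx : x ∈ P.parityPart p) (hy : y ∈ P.parityPart q) (hxy : P.Br x y = C v)
    (hxz : P.Br x z = C w) :
    P.Br x (y * z) = C (v * z + paritySign (p && q) • (y * w)) := by
  rw [br_mul hx hy, hxy, hxz, ← C_mul, ← C_mul, smul_C, ← C_add, add_comm]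

theorem br_algebraMap (P : PVA A) (x : A) (r : ℂ) : P.Br x (algebraMap ℂ A r) = 0 := by
  have br_one : P.Br x 1 = 0 := by simpa using P.leibniz x 1 1 (.inr (map_one _))
  rw [Algebra.algebraMap_eq_smul_one, map_smul, br_one, smul_zero]

theorem br_algebraMap_left (P : PVA A) (r : ℂ) (x : A) : P.Br (algebraMap ℂ A r) x = 0 := by
  have algebraMap_even : P.σ (algebraMap ℂ A r) = algebraMap ℂ A r := P.σ.commutes r
  rw [P.skew _ _ (.inl algebraMap_even), br_algebraMap, ← C_0, oppSubst_C, C_0, neg_zero]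

end PVA

namespace BasisData

variable {g : Type} [AddCommGroup g] [Module ℂ g] {D : SuperSetup g}
  {I : Type} [Fintype I] [DecidableEq I] (Bs : BasisData D I) {a : g} {i : ℚ} {α : I}

theorem mem_S : α ∈ Bs.S ↔ 0 < Bs.jdeg α := by
  simp [S]

theorem u_mem_parityPart (α : I) : Bs.u α ∈ D.parityPart (Bs.par α) :=
  SuperSetup.mem_parityPart.2 (Bs.hσu α)

theorem udual_mem_parityPart (α : I) : Bs.udual α ∈ D.parityPart (Bs.par α) :=
  SuperSetup.mem_parityPart.2 (Bs.hσud α)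

theorem sum_filter_jdeg_form_smul (t : ℚ → Prop) [DecidablePred t] (ha : a ∈ D.gwt i) :
    ∑ α with t (Bs.jdeg α), D.form a (Bs.udual α) • Bs.u α = if t i then a else 0 := by
  have term_eq (α : I) : (if t (Bs.jdeg α) then D.form a (Bs.udual α) • Bs.u α else 0) =
      if t i then D.form a (Bs.udual α) • Bs.u α else 0 := by
    by_cases h : Bs.jdeg α = i
    · rw [h]
    · have hne : i + -Bs.jdeg α ≠ 0 := fun h0 => h (by linarith)
      simp [SuperSetup.form_eq_zero_of_mem_gwt ha (Bs.hud α) hne]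
  rw [Finset.sum_filter, Finset.sum_congr rfl fun α _ => term_eq α]
  split_ifs
  · exact Bs.compl a
  · exact Finset.sum_const_zero

theorem πle_eq_ite (ha : a ∈ D.gwt i) : Bs.πle a = if i ≤ 0 then a else 0 :=
  Bs.sum_filter_jdeg_form_smul (· ≤ 0) ha

theorem sum_S_form_smul (ha : a ∈ D.gwt i) :
    ∑ α ∈ Bs.S, D.form a (Bs.udual α) • Bs.u α = if 0 < i then a else 0 :=
  Bs.sum_filter_jdeg_form_smul (0 < ·) ha

end BasisData

namespace BRST

open SuperSetup BasisData PVA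

variable {g : Type} [AddCommGroup g] [Module ℂ g] {D : SuperSetup g}
  {I : Type} [Fintype I] [DecidableEq I] {Bs : BasisData D I}
  {A : Type} [Ring A] [Algebra ℂ A] {P : PVA A} {k : ℂ} (R : BRST D Bs P k)
  {a b c d : g} {i j : ℚ} {p q : Bool}

theorem ι_mem_parityPart (ha : a ∈ D.parityPart p) : R.ι a ∈ P.parityPart p := by
  rw [PVA.mem_parityPart, R.σι, SuperSetup.mem_parityPart.1 ha, map_smul]

theorem Φn_mem_parityPart (ha : a ∈ D.parityPart p) : R.Φn a ∈ P.parityPart p := by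
  rw [PVA.mem_parityPart, R.σΦ, SuperSetup.mem_parityPart.1 ha, map_smul]

theorem φc_mem_parityPart (ha : a ∈ D.parityPart p) : R.φc a ∈ P.parityPart (!p) := by
  rw [PVA.mem_parityPart, R.σφc, SuperSetup.mem_parityPart.1 ha, map_smul]
  cases p <;> simp [paritySign]

theorem φd_mem_parityPart (ha : a ∈ D.parityPart p) : R.φd a ∈ P.parityPart (!p) := by
  rw [PVA.mem_parityPart, R.σφd, SuperSetup.mem_parityPart.1 ha, map_smul]
  cases p <;> simp [paritySign]

/-- The charged fermion part `J^{ch}_a = ∑_{α∈S} φ^α φ_{[u_α, a]}` of `J_a`. -/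
def Jch (a : g) : A := ∑ α ∈ Bs.S, R.φd (Bs.udual α) * R.φc (D.lie (Bs.u α) a)

theorem Jel_eq_ι_add_Jch (a : g) : R.Jel a = R.ι a + R.Jch a := rfl

theorem Jch_mem_parityPart (ha : a ∈ D.parityPart p) : R.Jch a ∈ P.parityPart p := by
  refine Submodule.sum_mem _ fun α _ => ?_
  have parity_eq : (!Bs.par α ^^ !(Bs.par α ^^ p)) = p := by cases Bs.par α <;> simp
  rw [← parity_eq]
  exact mul_mem_parityPart (R.φd_mem_parityPart (Bs.udual_mem_parityPart α))
    (R.φc_mem_parityPart (lie_mem_parityPart (Bs.u_mem_parityPart α) ha))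

theorem Jel_mem_parityPart (ha : a ∈ D.parityPart p) : R.Jel a ∈ P.parityPart p :=
  add_mem (R.ι_mem_parityPart ha) (R.Jch_mem_parityPart ha)

theorem sum_S_form_smul_φc_lie (hd : d ∈ D.gwt i) (hb : b ∈ D.gwt j) (hj : j ≤ 0) :
    ∑ β ∈ Bs.S, D.form d (Bs.udual β) • R.φc (D.lie (Bs.u β) b) = R.φc (D.lie d b) := by
  calc ∑ β ∈ Bs.S, D.form d (Bs.udual β) • R.φc (D.lie (Bs.u β) b)
      = R.φc (D.lie (∑ β ∈ Bs.S, D.form d (Bs.udual β) • Bs.u β) b) := by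
        simp only [map_sum, map_smul, LinearMap.sum_apply, LinearMap.smul_apply]
    _ = R.φc (D.lie d b) := by
        rw [Bs.sum_S_form_smul hd]
        split_ifs with hi
        · rfl
        · rw [R.φc_proj (i + j) (by linarith) _ (lie_mem_gwt hd hb)]
          simp

theorem br_Jch_right_eq_C {x : A} {v w : I → A} (hx : x ∈ P.parityPart p)
    (hv : ∀ α ∈ Bs.S, P.Br x (R.φd (Bs.udual α)) = C (v α))
    (hw : ∀ α ∈ Bs.S, P.Br x (R.φc (D.lie (Bs.u α) a)) = C (w α)) :
    P.Br x (R.Jch a) = C (∑ α ∈ Bs.S, (v α * R.φc (D.lie (Bs.u α) a) +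
      paritySign (p && !Bs.par α) • (R.φd (Bs.udual α) * w α))) := by
  rw [Jch, map_sum, map_sum]
  exact Finset.sum_congr rfl fun α hα =>
    br_mul_eq_C hx (R.φd_mem_parityPart (Bs.udual_mem_parityPart α)) (hv α hα) (hw α hα)

theorem br_Jch_right_eq_zero {x : A} (hx : x ∈ P.parityPart p)
    (hd : ∀ α ∈ Bs.S, P.Br x (R.φd (Bs.udual α)) = 0)
    (hc : ∀ α ∈ Bs.S, P.Br x (R.φc (D.lie (Bs.u α) a)) = 0) : P.Br x (R.Jch a) = 0 := by
  simpa using R.br_Jch_right_eq_C (v := 0) (w := 0) hx (by simpa using hd) (by simpa using hc)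

theorem br_φd_φc (hb : b ∈ D.gwt j) (hbq : b ∈ D.parityPart q) (hj : j < 0)
    (hc : c ∈ D.gwt i) (hcp : c ∈ D.parityPart p) :
    P.Br (R.φd b) (R.φc c) = C (algebraMap ℂ A (paritySign q * D.form c b)) := by
  rcases le_or_gt i 0 with hi | hi
  · rw [R.φc_proj i hi c hc, form_eq_zero_of_mem_gwt hc hb (by linarith)]
    simp
  rw [br_eq_C_of_br_swap_eq_C (R.φd_mem_parityPart hbq) (R.φc_mem_parityPart hcp)
    (R.br_φφd i j hi hj c hc b hb), Algebra.smul_def, ← map_mul]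
  by_cases hpq : p = q
  · subst hpq
    cases p <;> simp [paritySign]
  · rw [form_eq_zero_of_mem_parityPart hcp hbq hpq, mul_zero, mul_zero]

theorem br_φc_Jch (hc : c ∈ D.gwt j) (hcq : c ∈ D.parityPart q) (hj : 0 < j) (a : g) :
    P.Br (R.φc c) (R.Jch a) = C (R.φc (D.lie c a)) := by
  have br_φd (α : I) (hα : α ∈ Bs.S) :=
    R.br_φφd j (-Bs.jdeg α) hj (neg_neg_of_pos (Bs.mem_S.1 hα)) c hc _ (Bs.hud α)
  rw [R.br_Jch_right_eq_C (w := 0) (R.φc_mem_parityPart hcq) br_φd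
    fun α _ => (R.br_φφ _ _).trans C_0.symm]
  have expand_c : ∑ α ∈ Bs.S, D.form c (Bs.udual α) • Bs.u α = c := by
    rw [Bs.sum_S_form_smul hc, if_pos hj]
  simp only [Pi.zero_apply, mul_zero, smul_zero, add_zero, ← Algebra.smul_def]
  conv_rhs => rw [← expand_c]
  simp only [map_sum, map_smul, LinearMap.sum_apply, LinearMap.smul_apply]

theorem br_Jch_φc (ha : a ∈ D.gwt i) (hap : a ∈ D.parityPart p) (hi : i ≤ 0)
    (hc : c ∈ D.gwt j) (hcq : c ∈ D.parityPart q) :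
    P.Br (R.Jch a) (R.φc c) = C (paritySign p • R.φc (D.lie a c)) := by
  rcases le_or_gt j 0 with hj | hj
  · rw [R.φc_proj j hj c hc, R.φc_proj (i + j) (by linarith) _ (lie_mem_gwt ha hc)]
    simp
  rw [br_eq_C_of_br_swap_eq_C (R.Jch_mem_parityPart hap) (R.φc_mem_parityPart hcq)
    (R.br_φc_Jch hc hcq hj a), lie_skew_of_mem_parityPart hcq hap, map_smul R.φc, smul_smul]
  cases p <;> cases q <;> simp [paritySign]

theorem br_φd_Jch (ha : a ∈ D.gwt i) (hap : a ∈ D.parityPart p)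
    (hb : b ∈ D.gwt j) (hbq : b ∈ D.parityPart q) (hj : j < 0) :
    P.Br (R.φd b) (R.Jch a) = C (∑ α ∈ Bs.S,
      (paritySign (!q && !Bs.par α) * (paritySign q * D.form (D.lie (Bs.u α) a) b)) •
        R.φd (Bs.udual α)) := by
  have br_φc (α : I) (_ : α ∈ Bs.S) := R.br_φd_φc hb hbq hj (lie_mem_gwt (Bs.hu α) ha)
    (lie_mem_parityPart (Bs.u_mem_parityPart α) hap)
  rw [R.br_Jch_right_eq_C (v := 0) (R.φd_mem_parityPart hbq)
    (fun α _ => (R.br_φdφd _ _).trans C_0.symm) br_φc]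
  simp only [Pi.zero_apply, zero_mul, zero_add, ← Algebra.commutes, ← Algebra.smul_def, smul_smul]

theorem br_Jch_φd (ha : a ∈ D.gwt i) (hap : a ∈ D.parityPart p)
    (hb : b ∈ D.gwt j) (hbq : b ∈ D.parityPart q) (hj : j < 0) :
    P.Br (R.Jch a) (R.φd b) =
      C (∑ α ∈ Bs.S, D.form (D.lie (Bs.u α) a) b • R.φd (Bs.udual α)) := by
  rw [br_eq_C_of_br_swap_eq_C (R.Jch_mem_parityPart hap) (R.φd_mem_parityPart hbq)
    (R.br_φd_Jch ha hap hb hbq hj), Finset.smul_sum]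
  congr 1
  refine Finset.sum_congr rfl fun α _ => ?_
  rw [smul_smul]
  by_cases hq : (Bs.par α ^^ p) = q
  · subst hq
    cases Bs.par α <;> cases p <;> simp [paritySign]
  · rw [form_eq_zero_of_mem_parityPart (lie_mem_parityPart (Bs.u_mem_parityPart α) hap) hbq hq]
    simp

theorem br_Jch_Jch (ha : a ∈ D.gwt i) (hap : a ∈ D.parityPart p) (hi : i ≤ 0)
    (hb : b ∈ D.gwt j) (hbq : b ∈ D.parityPart q) (hj : j ≤ 0) :
    P.Br (R.Jch a) (R.Jch b) = C (R.Jch (D.lie a b)) := by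
  have br_φd (β : I) (hβ : β ∈ Bs.S) := R.br_Jch_φd ha hap (Bs.hud β) (Bs.udual_mem_parityPart β)
    (neg_neg_of_pos (Bs.mem_S.1 hβ))
  have br_φc (β : I) (_ : β ∈ Bs.S) := R.br_Jch_φc ha hap hi (lie_mem_gwt (Bs.hu β) hb)
    (lie_mem_parityPart (Bs.u_mem_parityPart β) hbq)
  have φd_sum : ∑ β ∈ Bs.S, (∑ α ∈ Bs.S, D.form (D.lie (Bs.u α) a) (Bs.udual β) •
        R.φd (Bs.udual α)) * R.φc (D.lie (Bs.u β) b) =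
      ∑ α ∈ Bs.S, R.φd (Bs.udual α) * R.φc (D.lie (D.lie (Bs.u α) a) b) := by
    simp only [Finset.sum_mul]
    rw [Finset.sum_comm]
    refine Finset.sum_congr rfl fun α _ => ?_
    rw [← R.sum_S_form_smul_φc_lie (lie_mem_gwt (Bs.hu α) ha) hb hj, Finset.mul_sum]
    simp only [smul_mul_assoc, mul_smul_comm]
  rw [R.br_Jch_right_eq_C (R.Jch_mem_parityPart hap) br_φd br_φc, Finset.sum_add_distrib, φd_sum,
    ← Finset.sum_add_distrib, Jch]
  congr 1
  refine Finset.sum_congr rfl fun α _ => ?_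
  rw [lie_lie_of_mem_parityPart (Bs.u_mem_parityPart α) hap b, map_add, mul_add, map_smul,
    mul_smul_comm, mul_smul_comm, smul_smul]
  congr 2
  cases Bs.par α <;> cases p <;> simp [paritySign]

theorem br_ι_Jch (hap : a ∈ D.parityPart p) (b : g) : P.Br (R.ι a) (R.Jch b) = 0 :=
  R.br_Jch_right_eq_zero (R.ι_mem_parityPart hap) (fun _ _ => R.br_curφd _ _)
    fun _ _ => R.br_curφc _ _

theorem br_Jel_Jel (ha : a ∈ D.gwt i) (hap : a ∈ D.parityPart p) (hi : i ≤ 0)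
    (hb : b ∈ D.gwt j) (hbq : b ∈ D.parityPart q) (hj : j ≤ 0) :
    P.Br (R.Jel a) (R.Jel b) =
      C (R.Jel (D.lie a b)) + monomial 1 (algebraMap ℂ A (k * D.form a b)) := by
  have br_Jch_ι : P.Br (R.Jch a) (R.ι b) = 0 := br_eq_zero_of_br_swap_eq_zero
    (R.Jch_mem_parityPart hap) (R.ι_mem_parityPart hbq) (R.br_ι_Jch hbq a)
  simp only [Jel_eq_ι_add_Jch, map_add, LinearMap.add_apply]
  rw [R.br_cur, R.br_ι_Jch hap, br_Jch_ι, R.br_Jch_Jch ha hap hi hb hbq hj]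
  abel

theorem br_Φn_Jel (hap : a ∈ D.parityPart p) (hbq : b ∈ D.parityPart q) :
    P.Br (R.Φn a) (R.Jel b) = 0 := by
  have hΦ := R.Φn_mem_parityPart hap
  have br_φd (α : I) (_ : α ∈ Bs.S) : P.Br (R.Φn a) (R.φd (Bs.udual α)) = 0 :=
    br_eq_zero_of_br_swap_eq_zero hΦ (R.φd_mem_parityPart (Bs.udual_mem_parityPart α))
      (R.br_φdΦ _ _)
  have br_φc (α : I) (_ : α ∈ Bs.S) : P.Br (R.Φn a) (R.φc (D.lie (Bs.u α) b)) = 0 :=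
    br_eq_zero_of_br_swap_eq_zero hΦ
      (R.φc_mem_parityPart (lie_mem_parityPart (Bs.u_mem_parityPart α) hbq)) (R.br_φcΦ _ _)
  have br_ι : P.Br (R.Φn a) (R.ι b) = 0 :=
    br_eq_zero_of_br_swap_eq_zero hΦ (R.ι_mem_parityPart hbq) (R.br_curΦ _ _)
  rw [Jel_eq_ι_add_Jch, map_add, br_ι, R.br_Jch_right_eq_zero hΦ br_φd br_φc, add_zero]

theorem Jel_zero : R.Jel 0 = 0 := by
  simp [Jel]

theorem Kel_of_nonpos (ha : a ∈ D.gwt i) (hi : i ≤ 0) (ε : ℂ) : R.Kel a ε = R.Jel a := by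
  rw [Kel, Bs.πle_eq_ite ha, if_pos hi, R.Φn_proj i (by linarith) a ha,
    form_eq_zero_of_mem_gwt ha f_mem_gwt (by linarith)]
  simp

theorem Kel_of_half (ha : a ∈ D.gwt (1 / 2)) (ε : ℂ) : R.Kel a ε = -(ε • R.Φn a) := by
  rw [Kel, Bs.πle_eq_ite ha, if_neg (by norm_num), Jel_zero,
    form_eq_zero_of_mem_gwt ha f_mem_gwt (by norm_num)]
  simp

theorem Kel_of_pos_of_ne_half (ha : a ∈ D.gwt i) (hi : 0 < i) (hi' : i ≠ 1 / 2) (ε : ℂ) :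
    R.Kel a ε = algebraMap ℂ A (-D.form a D.f) := by
  rw [Kel, Bs.πle_eq_ite ha, if_neg hi.not_ge, Jel_zero, R.Φn_proj i hi' a ha]
  simp

theorem br_Kel_Kel_of_nonpos (ha : a ∈ D.gwt i) (hap : a ∈ D.parityPart p) (hi : i ≤ 0)
    (hb : b ∈ D.gwt j) (hbq : b ∈ D.parityPart q) (hj : j ≤ 0) :
    P.Br (R.Kel a (paritySign p)) (R.Kel b (paritySign q)) =
      C (R.Kel (D.lie a b) (paritySign p * paritySign q)) +
        monomial 1 (algebraMap ℂ A (k * D.form a b)) := by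
  rw [R.Kel_of_nonpos ha hi, R.Kel_of_nonpos hb hj,
    R.Kel_of_nonpos (lie_mem_gwt ha hb) (by linarith)]
  exact R.br_Jel_Jel ha hap hi hb hbq hj

theorem br_Kel_Kel_of_half (ha : a ∈ D.gwt (1 / 2)) (hap : a ∈ D.parityPart p)
    (hb : b ∈ D.gwt (1 / 2)) (hbq : b ∈ D.parityPart q) :
    P.Br (R.Kel a (paritySign p)) (R.Kel b (paritySign q)) =
      C (algebraMap ℂ A (D.form (D.lie a b) D.f)) := by
  have sign_mul_form : paritySign p * paritySign q * D.form (D.lie a b) D.f =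
      D.form (D.lie a b) D.f := by
    have f_even : D.f ∈ D.parityPart false := SuperSetup.mem_parityPart_false.2 D.f_even
    convert paritySign_mul_form (lie_mem_parityPart hap hbq) f_even using 2
    cases p <;> cases q <;> simp [paritySign]
  rw [R.Kel_of_half ha, R.Kel_of_half hb]
  simp only [map_neg, map_smul, LinearMap.neg_apply, LinearMap.smul_apply, neg_neg, smul_neg]
  rw [R.br_ΦΦ a ha b hb, form_lie_comm_of_even D.f_even, smul_smul, mul_comm, smul_C,
    Algebra.smul_def, ← map_mul, sign_mul_form]

theorem Kel_lie_of_half (ha : a ∈ D.gwt (1 / 2)) (hb : b ∈ D.gwt (1 / 2)) (ε : ℂ) :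
    R.Kel (D.lie a b) ε = -algebraMap ℂ A (D.form (D.lie a b) D.f) := by
  rw [R.Kel_of_pos_of_ne_half (lie_mem_gwt ha hb) (by norm_num) (by norm_num), map_neg]

theorem br_Kel_Kel_eq_zero (hij : ¬(i ≤ 0 ∧ j ≤ 0)) (hij' : ¬(i = 1 / 2 ∧ j = 1 / 2))
    (ha : a ∈ D.gwt i) (hap : a ∈ D.parityPart p) (hb : b ∈ D.gwt j) (hbq : b ∈ D.parityPart q) :
    P.Br (R.Kel a (paritySign p)) (R.Kel b (paritySign q)) = 0 := by
  have degree_cases (r : ℚ) : r ≤ 0 ∨ r = 1 / 2 ∨ (0 < r ∧ r ≠ 1 / 2) := by grind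
  rcases degree_cases i with hi | rfl | ⟨hi, hi'⟩
  · rcases degree_cases j with hj | rfl | ⟨hj, hj'⟩
    · exact absurd ⟨hi, hj⟩ hij
    · have br_Jel_Φn : P.Br (R.Jel a) (R.Φn b) = 0 := br_eq_zero_of_br_swap_eq_zero
        (R.Jel_mem_parityPart hap) (R.Φn_mem_parityPart hbq) (R.br_Φn_Jel hbq hap)
      rw [R.Kel_of_nonpos ha hi, R.Kel_of_half hb, map_neg, map_smul, br_Jel_Φn, smul_zero,
        neg_zero]
    · rw [R.Kel_of_pos_of_ne_half hb hj hj', P.br_algebraMap]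
  · rcases degree_cases j with hj | rfl | ⟨hj, hj'⟩
    · rw [R.Kel_of_half ha, R.Kel_of_nonpos hb hj, map_neg, map_smul, LinearMap.neg_apply,
        LinearMap.smul_apply, R.br_Φn_Jel hap hbq, smul_zero, neg_zero]
    · exact absurd ⟨rfl, rfl⟩ hij'
    · rw [R.Kel_of_pos_of_ne_half hb hj hj', P.br_algebraMap]
  · rw [R.Kel_of_pos_of_ne_half ha hi hi', P.br_algebraMap_left]

end BRST

/-- For the building blocks
`K_a = J_{π_≤ a} - (-1)^{p(a)} Φ_a - (a|f)` in `S(R)`, the `λ`-brackets are: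
`{K_a λ K_b} = K_{[a,b]} + λk(a|b)` if `a, b ∈ ⊕_{i≤0} g(i)`;
`{K_a λ K_b} = -K_{[a,b]} = ([a,b]|f)` if `a, b ∈ g(1/2)`; and
`{K_a λ K_b} = 0` otherwise. -/
theorem statement5
    (g : Type) [AddCommGroup g] [Module ℂ g] (D : SuperSetup g)
    (I : Type) [Fintype I] [DecidableEq I] (Bs : BasisData D I)
    (A : Type) [Ring A] [Algebra ℂ A] (P : PVA A) (k : ℂ)
    (R : BRST D Bs P k) :
    (∀ (i j : ℚ), i ≤ 0 → j ≤ 0 → ∀ a ∈ D.gwt i, ∀ b ∈ D.gwt j,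
      ∀ εa εb : ℂ, IsParity D a εa → IsParity D b εb →
        P.Br (R.Kel a εa) (R.Kel b εb) =
          Polynomial.C (R.Kel (D.lie a b) (εa * εb))
            + Polynomial.monomial 1 (algebraMap ℂ A (k * D.form a b))) ∧
    (∀ a ∈ D.gwt (1 / 2 : ℚ), ∀ b ∈ D.gwt (1 / 2 : ℚ),
      ∀ εa εb : ℂ, IsParity D a εa → IsParity D b εb →
        P.Br (R.Kel a εa) (R.Kel b εb) = - Polynomial.C (R.Kel (D.lie a b) (εa * εb)) ∧
        P.Br (R.Kel a εa) (R.Kel b εb) =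
          Polynomial.C (algebraMap ℂ A (D.form (D.lie a b) D.f))) ∧
    (∀ (i j : ℚ), ¬ (i ≤ 0 ∧ j ≤ 0) → ¬ (i = 1 / 2 ∧ j = 1 / 2) →
      ∀ a ∈ D.gwt i, ∀ b ∈ D.gwt j,
        ∀ εa εb : ℂ, IsParity D a εa → IsParity D b εb →
          P.Br (R.Kel a εa) (R.Kel b εb) = 0) := by
  refine ⟨fun i j hi hj a ha b hb εa εb hεa hεb => ?_, fun a ha b hb εa εb hεa hεb => ?_,
    fun i j hij hij' a ha b hb εa εb hεa hεb => ?_⟩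
  all_goals
    obtain ⟨p, rfl, hap⟩ := hεa.exists_mem_parityPart
    obtain ⟨q, rfl, hbq⟩ := hεb.exists_mem_parityPart
  · exact R.br_Kel_Kel_of_nonpos ha hap hi hb hbq hj
  · have bracket_eq := R.br_Kel_Kel_of_half ha hap hb hbq
    refine ⟨?_, bracket_eq⟩
    rw [bracket_eq, R.Kel_lie_of_half ha hb, C_neg, neg_neg]
  · exact R.br_Kel_Kel_eq_zero hij hij' ha hap hb hbq
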